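/- Assume u ∈ H²(Ω). Then there exists a constant C > 0 depending only on Ω, a, b and c such that for every N and every mesh equidistributing the adaptation function ρ computed from its own finite element solution u_h, the error satisfies ‖(u − u_h)'‖_Ω ≤ C ‖r‖_Ω / N, where r = f + a' u' − b u' − c u. -/

import Mathlib

/-!
Setting of Huang–He, "Error analysis for equidistributing meshes":
the boundary value problem  −(a u')' + b u' + c u = f on Ω = (0,1), u(0)=u(1)=0,
its linear finite element discretization on a mesh 0 = x₀ < ⋯ < x_N = 1,
and the residual-based equidistribution quantities.
-/

noncomputable section
open MeasureTheory Real

namespace EquidMesh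

/-- L² norm on (0,1). -/
def L2 (g : ℝ → ℝ) : ℝ := Real.sqrt (∫ t in (0:ℝ)..1, (g t)^2)

/-- L¹ norm on (0,1). -/
def L1 (g : ℝ → ℝ) : ℝ := ∫ t in (0:ℝ)..1, |g t|

/-- The L^{2/3} quasi-norm on (0,1): (∫₀¹ |g|^{2/3})^{3/2}. -/
def Lp23 (g : ℝ → ℝ) : ℝ := (∫ t in (0:ℝ)..1, |g t| ^ ((2:ℝ)/3)) ^ ((3:ℝ)/2)

/-- L^∞ norm (essential supremum of |g|) on (0,1). -/
def Linf (g : ℝ → ℝ) : ℝ := essSup (fun t => |g t|) (volume.restrict (Set.Ioo (0:ℝ) 1))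

/-- Membership in L²(0,1). -/
def MemL2 (g : ℝ → ℝ) : Prop :=
  Measurable g ∧ IntervalIntegrable (fun t => (g t)^2) volume 0 1

/-- Membership in L^∞(0,1). -/
def MemLinf (g : ℝ → ℝ) : Prop :=
  Measurable g ∧ ∃ M : ℝ, ∀ᵐ x ∂(volume.restrict (Set.Ioo (0:ℝ) 1)), |g x| ≤ M

/-- `g` is absolutely continuous on [0,1] with derivative `g' ∈ L¹(0,1)`. -/
def HasL1Deriv (g g' : ℝ → ℝ) : Prop :=
  Measurable g' ∧ IntervalIntegrable g' volume 0 1 ∧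
    ∀ x ∈ Set.Icc (0:ℝ) 1, g x = g 0 + ∫ t in (0:ℝ)..x, g' t

/-- A function in H¹(0,1): absolutely continuous on [0,1], carried together with its
(a.e.) derivative, which lies in L²(0,1). -/
structure H1 where
  val : ℝ → ℝ
  dval : ℝ → ℝ
  dval_meas : Measurable dval
  dval_int : IntervalIntegrable dval volume 0 1
  dval_sq_int : IntervalIntegrable (fun t => (dval t)^2) volume 0 1
  ftc : ∀ x ∈ Set.Icc (0:ℝ) 1, val x = val 0 + ∫ t in (0:ℝ)..x, dval t

/-- `u ∈ H²(0,1)`: the derivative `u'` is absolutely continuous with `u'' ∈ L²(0,1)`. -/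
def H1.IsH2 (u : H1) : Prop :=
  ∃ u'' : ℝ → ℝ, Measurable u'' ∧ IntervalIntegrable u'' volume 0 1 ∧
    IntervalIntegrable (fun t => (u'' t)^2) volume 0 1 ∧
    ∀ x ∈ Set.Icc (0:ℝ) 1, u.dval x = u.dval 0 + ∫ t in (0:ℝ)..x, u'' t

/-- The coefficients of the elliptic problem on Ω = (0,1):
`a, b ∈ W^{1,∞}(Ω)`, `c ∈ L^∞(Ω)`, `a ≥ a₀ > 0`, and `c − b'/2 ≥ 0` a.e. -/
structure Coeffs where
  a : ℝ → ℝ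
  b : ℝ → ℝ
  c : ℝ → ℝ
  a' : ℝ → ℝ
  b' : ℝ → ℝ
  a0 : ℝ
  a0_pos : 0 < a0
  a_lb : ∀ x ∈ Set.Icc (0:ℝ) 1, a0 ≤ a x
  a'_meas : Measurable a'
  b'_meas : Measurable b'
  c_meas : Measurable c
  a'_int : IntervalIntegrable a' volume 0 1
  b'_int : IntervalIntegrable b' volume 0 1
  a'_bdd : ∃ M : ℝ, ∀ᵐ x ∂(volume.restrict (Set.Ioo (0:ℝ) 1)), |a' x| ≤ M
  b'_bdd : ∃ M : ℝ, ∀ᵐ x ∂(volume.restrict (Set.Ioo (0:ℝ) 1)), |b' x| ≤ M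
  c_bdd : ∃ M : ℝ, ∀ᵐ x ∂(volume.restrict (Set.Ioo (0:ℝ) 1)), |c x| ≤ M
  ftc_a : ∀ x ∈ Set.Icc (0:ℝ) 1, a x = a 0 + ∫ t in (0:ℝ)..x, a' t
  ftc_b : ∀ x ∈ Set.Icc (0:ℝ) 1, b x = b 0 + ∫ t in (0:ℝ)..x, b' t
  cb_nonneg : ∀ᵐ x ∂(volume.restrict (Set.Ioo (0:ℝ) 1)), 0 ≤ c x - b' x / 2

/-- The bilinear form B(u,v) = ∫₀¹ (a u' v' + b u' v + c u v) dx. -/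
def Coeffs.B (P : Coeffs) (u v : H1) : ℝ :=
  ∫ t in (0:ℝ)..1,
    (P.a t * u.dval t * v.dval t + P.b t * u.dval t * v.val t + P.c t * u.val t * v.val t)

/-- The right-hand side functional (f, v) = ∫₀¹ f v dx. -/
def ip (f : ℝ → ℝ) (v : H1) : ℝ := ∫ t in (0:ℝ)..1, f t * v.val t

/-- `u ∈ H¹₀(Ω)` is the weak solution: B(u,v) = (f,v) for all v ∈ H¹₀(Ω). -/
def Coeffs.IsWeakSolution (P : Coeffs) (f : ℝ → ℝ) (u : H1) : Prop :=
  u.val 0 = 0 ∧ u.val 1 = 0 ∧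
    ∀ v : H1, v.val 0 = 0 → v.val 1 = 0 → P.B u v = ip f v

/-- A mesh of N elements of Ω = (0,1): 0 = x₀ < x₁ < ⋯ < x_N = 1. -/
structure Mesh (N : ℕ) where
  x : ℕ → ℝ
  x_zero : x 0 = 0
  x_last : x N = 1
  x_mono : ∀ i < N, x i < x (i+1)

/-- Element length (the element of index `i` is `(x i, x (i+1))`, `0 ≤ i < N`). -/
def Mesh.h {N : ℕ} (m : Mesh N) (i : ℕ) : ℝ := m.x (i+1) - m.x i

/-- `v` is piecewise linear with respect to the mesh: its derivative is constant
inside each element. -/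
def Mesh.IsPL {N : ℕ} (m : Mesh N) (v : H1) : Prop :=
  ∀ i < N, ∃ s : ℝ, ∀ t ∈ Set.Ioo (m.x i) (m.x (i+1)), v.dval t = s

/-- `uh` is the linear finite element solution on the mesh `m`:
a continuous piecewise linear function vanishing at 0 and 1 with
B(u_h, v_h) = (f, v_h) for all piecewise linear v_h vanishing at 0 and 1. -/
def Coeffs.IsFESolution (P : Coeffs) (f : ℝ → ℝ) {N : ℕ} (m : Mesh N) (uh : H1) : Prop :=
  uh.val 0 = 0 ∧ uh.val 1 = 0 ∧ m.IsPL uh ∧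
    ∀ v : H1, v.val 0 = 0 → v.val 1 = 0 → m.IsPL v → P.B uh v = ip f v

/-- The residual of `w`: r = f + a' w' − b w' − c w. -/
def Coeffs.res (P : Coeffs) (f : ℝ → ℝ) (w : H1) : ℝ → ℝ :=
  fun t => f t + P.a' t * w.dval t - P.b t * w.dval t - P.c t * w.val t

/-- The element L² average ⟨g⟩_i = (h_i⁻¹ ∫_{K_i} g²)^{1/2}. -/
def Mesh.avg {N : ℕ} (m : Mesh N) (g : ℝ → ℝ) (i : ℕ) : ℝ :=
  Real.sqrt ((1 / m.h i) * ∫ t in (m.x i)..(m.x (i+1)), (g t)^2)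

/-- The intensity parameter α_h = (Σ_i h_i ⟨g⟩_i^{2/3})³. -/
def Mesh.alpha {N : ℕ} (m : Mesh N) (g : ℝ → ℝ) : ℝ :=
  (∑ i ∈ Finset.range N, m.h i * (m.avg g i) ^ ((2:ℝ)/3)) ^ 3

/-- The adaptation function value ρ_i = (1 + α_h⁻¹ ⟨g⟩_i²)^{1/3}. -/
def Mesh.rho {N : ℕ} (m : Mesh N) (g : ℝ → ℝ) (i : ℕ) : ℝ :=
  (1 + (m.alpha g)⁻¹ * (m.avg g i)^2) ^ ((1:ℝ)/3)

/-- σ_h = Σ_i ρ_i h_i. -/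
def Mesh.sigma {N : ℕ} (m : Mesh N) (g : ℝ → ℝ) : ℝ :=
  ∑ i ∈ Finset.range N, m.rho g i * m.h i

/-- The mesh equidistributes (the piecewise constant adaptation function built from) `g`:
ρ_i h_i = σ_h / N for all elements. -/
def Mesh.IsEquidistributing {N : ℕ} (m : Mesh N) (g : ℝ → ℝ) : Prop :=
  ∀ i < N, m.rho g i * m.h i = m.sigma g / (N:ℝ)

/-- Membership in the mesh set S_N: 1/(ρ₀ N) ≤ h_i ≤ 2/N for all i. -/
def Mesh.InS {N : ℕ} (m : Mesh N) (ρ0 : ℝ) : Prop :=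
  ∀ i < N, 1 / (ρ0 * (N:ℝ)) ≤ m.h i ∧ m.h i ≤ 2 / (N:ℝ)

/-- The maximum norm distance ‖X − X̃‖_∞ between two meshes with the same N. -/
def meshDist {N : ℕ} (m m' : Mesh N) : ℝ :=
  (Finset.range (N+1)).sup' (Finset.nonempty_range_iff.mpr (Nat.succ_ne_zero N))
    (fun i => |m.x i - m'.x i|)

/-- The energy norm squared ‖v‖_E² = ∫₀¹ (a v'² + (c − b'/2) v²) dx. -/
def Coeffs.energySq (P : Coeffs) (v : H1) : ℝ :=
  ∫ t in (0:ℝ)..1, (P.a t * (v.dval t)^2 + (P.c t - P.b' t / 2) * (v.val t)^2)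


open Set

section Primitives

variable {f f' g g' : ℝ → ℝ} {s t : ℝ}

/-- `f` is absolutely continuous on the interval with endpoints `s`, `t`, and its derivative is
a.e. equal to `f'` in `(s, t)`. -/
def IsPrimitive (f f' : ℝ → ℝ) (s t : ℝ) : Prop :=
  AbsolutelyContinuousOnInterval f s t ∧
    ∀ᵐ x ∂(volume.restrict (Ioc s t)), HasDerivAt f (f' x) x

theorem ae_mem_Ioo (s t : ℝ) : ∀ᵐ x ∂(volume.restrict (Ioc s t)), x ∈ Ioo s t := by
  rw [← restrict_Ioo_eq_restrict_Ioc]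
  exact ae_restrict_mem measurableSet_Ioo

theorem IsPrimitive.of_integral (hst : s ≤ t) (hf' : IntervalIntegrable f' volume s t)
    (h : ∀ x ∈ Icc s t, f x = f s + ∫ y in s..x, f' y) : IsPrimitive f f' s t := by
  have hF : AbsolutelyContinuousOnInterval (fun x => f s + ∫ y in s..x, f' y) s t :=
    (contDiff_const (c := f s)).contDiffOn.absolutelyContinuousOnInterval.fun_add
      (hf'.absolutelyContinuousOnInterval_intervalIntegral left_mem_uIcc)
  constructor
  · rw [absolutelyContinuousOnInterval_iff] at hF ⊢
    intro ε hε
    obtain ⟨δ, hδ, H⟩ := hF ε hε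
    refine ⟨δ, hδ, fun E hE hEδ => ?_⟩
    convert H E hE hEδ using 1
    refine Finset.sum_congr rfl fun i hi => ?_
    have := hE.1 i hi
    rw [uIcc_of_le hst] at this
    rw [h _ this.1, h _ this.2]
  · filter_upwards [ae_mem_Ioo s t, ae_restrict_of_ae hf'.ae_hasDerivAt_integral] with x hx hd
    rw [uIcc_of_le hst] at hd
    have := (hd (Ioo_subset_Icc_self hx) s (left_mem_Icc.2 hst)).const_add (f s)
    refine this.congr_of_eventuallyEq ?_
    filter_upwards [Ioo_mem_nhds hx.1 hx.2] with y hy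
    exact h y (Ioo_subset_Icc_self hy)

theorem IsPrimitive.mono (hf : IsPrimitive f f' s t) {s₁ t₁ : ℝ} (hs : s ≤ s₁) (hst : s₁ ≤ t₁)
    (ht : t₁ ≤ t) : IsPrimitive f f' s₁ t₁ := by
  refine ⟨hf.1.mono ?_, ae_restrict_of_ae_restrict_of_subset (Ioc_subset_Ioc hs ht) hf.2⟩
  rw [uIcc_of_le hst, uIcc_of_le (hs.trans (hst.trans ht))]
  exact Icc_subset_Icc hs ht

theorem IsPrimitive.mul (hf : IsPrimitive f f' s t) (hg : IsPrimitive g g' s t) :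
    IsPrimitive (fun x => f x * g x) (fun x => f' x * g x + f x * g' x) s t := by
  refine ⟨hf.1.fun_mul hg.1, ?_⟩
  filter_upwards [hf.2, hg.2] with x h1 h2 using h1.mul h2

theorem IsPrimitive.inv (hst : s ≤ t) (hf : IsPrimitive f f' s t) {c : ℝ} (hc : 0 < c)
    (hcf : ∀ x ∈ Icc s t, c ≤ f x) :
    IsPrimitive (fun x => (f x)⁻¹) (fun x => -f' x / f x ^ 2) s t := by
  constructor
  · have hF := hf.1
    rw [absolutelyContinuousOnInterval_iff] at hF ⊢
    intro ε hε
    obtain ⟨δ, hδ, H⟩ := hF (ε * c ^ 2) (by positivity)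
    refine ⟨δ, hδ, fun E hE hEδ => ?_⟩
    have h1 := H E hE hEδ
    have h2 : ∑ i ∈ Finset.range E.1, dist (f (E.2 i).1)⁻¹ (f (E.2 i).2)⁻¹ ≤
        (∑ i ∈ Finset.range E.1, dist (f (E.2 i).1) (f (E.2 i).2)) / c ^ 2 := by
      rw [Finset.sum_div]
      refine Finset.sum_le_sum fun i hi => ?_
      have hm := hE.1 i hi
      rw [uIcc_of_le hst] at hm
      have hx := hcf _ hm.1
      have hy := hcf _ hm.2
      have hx0 := hc.trans_le hx
      have hy0 := hc.trans_le hy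
      rw [Real.dist_eq, Real.dist_eq, inv_sub_inv hx0.ne' hy0.ne', abs_div, abs_sub_comm,
        abs_of_pos (mul_pos hx0 hy0)]
      gcongr
      nlinarith
    refine h2.trans_lt ?_
    rw [div_lt_iff₀ (by positivity)]
    exact h1
  · filter_upwards [hf.2, ae_mem_Ioo s t] with x h1 h2
    exact h1.inv (hc.trans_le (hcf x (Ioo_subset_Icc_self h2))).ne'

theorem IsPrimitive.integral_eq_sub (hst : s ≤ t) (hf : IsPrimitive f f' s t) :
    ∫ x in s..t, f' x = f t - f s := by
  rw [← hf.1.integral_deriv_eq_sub, intervalIntegral.integral_of_le hst,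
    intervalIntegral.integral_of_le hst]
  refine integral_congr_ae ?_
  filter_upwards [hf.2] with x hx using hx.deriv.symm

theorem IsPrimitive.intervalIntegrable (hst : s ≤ t) (hf : IsPrimitive f f' s t) :
    IntervalIntegrable f' volume s t := by
  refine hf.1.intervalIntegrable_deriv.congr_ae ?_
  rw [uIoc_of_le hst]
  filter_upwards [hf.2] with x hx using hx.deriv

theorem IsPrimitive.continuousOn (hst : s ≤ t) (hf : IsPrimitive f f' s t) :
    ContinuousOn f (Icc s t) := by
  simpa [uIcc_of_le hst] using hf.1.continuousOn

end Primitives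

section Integrals

variable {f g : ℝ → ℝ} {s t : ℝ}

theorem intervalIntegral_mono_ae_restrict_Ioc (hst : s ≤ t) (hf : IntervalIntegrable f volume s t)
    (hg : IntervalIntegrable g volume s t)
    (h : ∀ᵐ x ∂(volume.restrict (Ioc s t)), f x ≤ g x) :
    ∫ x in s..t, f x ≤ ∫ x in s..t, g x := by
  rw [intervalIntegral.integral_of_le hst, intervalIntegral.integral_of_le hst]
  exact integral_mono_ae ((intervalIntegrable_iff_integrableOn_Ioc_of_le hst).1 hf)
    ((intervalIntegrable_iff_integrableOn_Ioc_of_le hst).1 hg) h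

theorem MemLp.intervalIntegrable_mul (hst : s ≤ t)
    (hf : MemLp f 2 (volume.restrict (Ioc s t))) (hg : MemLp g 2 (volume.restrict (Ioc s t))) :
    IntervalIntegrable (fun x => f x * g x) volume s t :=
  (intervalIntegrable_iff_integrableOn_Ioc_of_le hst).2 (hf.integrable_mul hg)

theorem MemLp.intervalIntegrable_sq (hst : s ≤ t)
    (hf : MemLp f 2 (volume.restrict (Ioc s t))) :
    IntervalIntegrable (fun x => f x ^ 2) volume s t :=
  (intervalIntegrable_iff_integrableOn_Ioc_of_le hst).2 hf.integrable_sq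

theorem MemLp.restrict_Ioc_mono (hf : MemLp f 2 (volume.restrict (Ioc s t))) {s₁ t₁ : ℝ}
    (hs : s ≤ s₁) (ht : t₁ ≤ t) : MemLp f 2 (volume.restrict (Ioc s₁ t₁)) :=
  hf.mono_measure (Measure.restrict_mono (Ioc_subset_Ioc hs ht) le_rfl)

theorem sq_intervalIntegral_le (hst : s ≤ t) (hf : MemLp f 2 (volume.restrict (Ioc s t))) :
    (∫ x in s..t, f x) ^ 2 ≤ (t - s) * ∫ x in s..t, f x ^ 2 := by
  have h1 : MemLp (fun _ : ℝ => (1 : ℝ)) 2 (volume.restrict (Ioc s t)) := memLp_const 1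
  have hf1 : IntervalIntegrable f volume s t := by
    simpa using MemLp.intervalIntegrable_mul hst hf h1
  have hf2 := MemLp.intervalIntegrable_sq hst hf
  have key : ∀ l : ℝ, 0 ≤ (t - s) * (l * l) + (-2 * ∫ x in s..t, f x) * l +
      ∫ x in s..t, f x ^ 2 := by
    intro l
    have h0 : 0 ≤ ∫ x in s..t, ((l * l + (-2 * l) * f x) + f x ^ 2) :=
      intervalIntegral.integral_nonneg hst fun x _ => by nlinarith [sq_nonneg (l - f x)]
    rw [intervalIntegral.integral_add (intervalIntegrable_const.add (hf1.const_mul _)) hf2,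
      intervalIntegral.integral_add intervalIntegrable_const (hf1.const_mul _),
      intervalIntegral.integral_const, intervalIntegral.integral_const_mul, smul_eq_mul] at h0
    linarith
  have := discrim_le_zero key
  rw [discrim] at this
  linarith

/-- Poincaré inequality for functions vanishing at the left endpoint. -/
theorem integral_sq_le_of_primitive (hst : s ≤ t) (hg : MemLp g 2 (volume.restrict (Ioc s t)))
    (h : ∀ x ∈ Icc s t, f x = ∫ y in s..x, g y) :
    ∫ x in s..t, f x ^ 2 ≤ (t - s) ^ 2 * ∫ x in s..t, g x ^ 2 := by
  have hint := MemLp.intervalIntegrable_sq hst hg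
  have hg1 : IntervalIntegrable g volume s t := by
    simpa using MemLp.intervalIntegrable_mul hst hg (memLp_const (1 : ℝ))
  have hpt : ∀ x ∈ Icc s t, f x ^ 2 ≤ (t - s) * ∫ x in s..t, g x ^ 2 := by
    intro x hx
    rw [h x hx]
    refine (sq_intervalIntegral_le hx.1 (MemLp.restrict_Ioc_mono hg le_rfl hx.2)).trans ?_
    have h0 : 0 ≤ ∫ y in s..x, g y ^ 2 :=
      intervalIntegral.integral_nonneg hx.1 fun _ _ => sq_nonneg _
    have h1 : ∫ y in s..x, g y ^ 2 ≤ ∫ y in s..t, g y ^ 2 :=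
      intervalIntegral.integral_mono_interval le_rfl hx.1 hx.2
        (Filter.Eventually.of_forall fun _ => sq_nonneg _) hint
    exact mul_le_mul (by linarith [hx.2]) h1 h0 (by linarith)
  have hf : ContinuousOn f (Icc s t) := by
    have hp := (IsPrimitive.of_integral (f := fun x => ∫ y in s..x, g y) hst hg1
      (fun x _ => by simp)).continuousOn hst
    exact hp.congr h
  have h2 := intervalIntegral.integral_mono_on hst
    ((hf.pow 2).intervalIntegrable_of_Icc hst) (intervalIntegrable_const (μ := volume)) hpt
  rw [intervalIntegral.integral_const, smul_eq_mul] at h2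
  exact h2.trans_eq (by ring)

end Integrals

section Equidistribution

/-- On a mesh equidistributing `ρ`, the weighted sum of residual moments is of order `N⁻²`. -/
theorem sum_cube_le_of_equidistributing {N : ℕ} (hN : 0 < N) {h A ρ : ℕ → ℝ} {σ : ℝ}
    (hh : ∀ i ∈ Finset.range N, 0 < h i) (hsum : ∑ i ∈ Finset.range N, h i = 1)
    (hA : ∀ i ∈ Finset.range N, 0 ≤ A i)
    (hρ : ∀ i ∈ Finset.range N, 0 ≤ ρ i)
    (hρ3 : ∀ i ∈ Finset.range N,
      ρ i ^ 3 = 1 + ((∑ j ∈ Finset.range N, h j * A j) ^ 3)⁻¹ * A i ^ 3)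
    (hσ : σ = ∑ i ∈ Finset.range N, ρ i * h i)
    (heq : ∀ i ∈ Finset.range N, ρ i * h i = σ / N) :
    (N : ℝ) ^ 2 * ∑ i ∈ Finset.range N, h i ^ 3 * A i ^ 3 ≤
      8 * ∑ i ∈ Finset.range N, h i * A i ^ 3 := by
  set β := ∑ j ∈ Finset.range N, h j * A j with hβ
  have hN' : (0 : ℝ) < N := by exact_mod_cast hN
  have hβ0 : 0 ≤ β := Finset.sum_nonneg fun i hi => mul_nonneg (hh i hi).le (hA i hi)
  have hβ3 : β ^ 3 ≤ ∑ i ∈ Finset.range N, h i * A i ^ 3 :=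
    Real.pow_arith_mean_le_arith_mean_pow _ h A (fun i hi => (hh i hi).le) hsum hA 3
  have hρle : ∀ i ∈ Finset.range N, ρ i ≤ 1 + β⁻¹ * A i := by
    intro i hi
    have hx : 0 ≤ β⁻¹ * A i := mul_nonneg (inv_nonneg.2 hβ0) (hA i hi)
    refine le_of_pow_le_pow_left₀ three_ne_zero (by linarith) ?_
    rw [hρ3 i hi, ← inv_pow, ← mul_pow]
    nlinarith [mul_nonneg hx hx]
  have hσ2 : σ ≤ 2 := by
    calc σ ≤ ∑ i ∈ Finset.range N, (h i + β⁻¹ * (h i * A i)) := by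
          rw [hσ]
          refine Finset.sum_le_sum fun i hi => ?_
          nlinarith [mul_le_mul_of_nonneg_right (hρle i hi) (hh i hi).le]
      _ = 1 + β⁻¹ * β := by rw [Finset.sum_add_distrib, hsum, ← Finset.mul_sum]
      _ ≤ 2 := by linarith [inv_mul_le_one (a := β)]
  have hσ0 : 0 ≤ σ := by
    rw [hσ]
    exact Finset.sum_nonneg fun i hi => mul_nonneg (hρ i hi) (hh i hi).le
  have hA3 : ∀ i ∈ Finset.range N, A i ^ 3 ≤ β ^ 3 * ρ i ^ 3 := by
    intro i hi
    rcases hβ0.eq_or_lt with h0 | h0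
    · have hz := (Finset.sum_eq_zero_iff_of_nonneg
        fun i hi => mul_nonneg (hh i hi).le (hA i hi)).1 (hβ.symm.trans h0.symm) i hi
      have hAi : A i = 0 := (mul_eq_zero.1 hz).resolve_left (hh i hi).ne'
      simp [hAi, ← h0]
    · rw [hρ3 i hi, mul_add, mul_inv_cancel_left₀ (by positivity)]
      linarith [pow_pos h0 3]
  have hterm : ∀ i ∈ Finset.range N, h i ^ 3 * A i ^ 3 ≤ β ^ 3 * (8 / N ^ 3) := by
    intro i hi
    calc h i ^ 3 * A i ^ 3 ≤ h i ^ 3 * (β ^ 3 * ρ i ^ 3) :=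
          mul_le_mul_of_nonneg_left (hA3 i hi) (pow_nonneg (hh i hi).le 3)
      _ = β ^ 3 * (σ / N) ^ 3 := by rw [← heq i hi]; ring
      _ ≤ β ^ 3 * (2 / N) ^ 3 := by gcongr
      _ = β ^ 3 * (8 / N ^ 3) := by rw [div_pow]; norm_num
  calc (N : ℝ) ^ 2 * ∑ i ∈ Finset.range N, h i ^ 3 * A i ^ 3
      ≤ (N : ℝ) ^ 2 * ∑ i ∈ Finset.range N, β ^ 3 * (8 / N ^ 3) :=
        mul_le_mul_of_nonneg_left (Finset.sum_le_sum hterm) (by positivity)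
    _ = 8 * β ^ 3 := by
        rw [Finset.sum_const, Finset.card_range, nsmul_eq_mul]
        field_simp
    _ ≤ _ := by linarith

theorem Mesh.strictMono {N : ℕ} (m : Mesh N) {i j : ℕ} (hij : i < j) (hj : j ≤ N) :
    m.x i < m.x j := by
  induction j, hij using Nat.le_induction with
  | base => exact m.x_mono i hj
  | succ k hk ih => exact (ih (by omega)).trans (m.x_mono k hj)

theorem Mesh.mono {N : ℕ} (m : Mesh N) {i j : ℕ} (hij : i ≤ j) (hj : j ≤ N) :
    m.x i ≤ m.x j := by
  rcases hij.eq_or_lt with rfl | h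
  · exact le_rfl
  · exact (m.strictMono h hj).le

theorem Mesh.nonneg {N : ℕ} (m : Mesh N) {i : ℕ} (hi : i ≤ N) : 0 ≤ m.x i := by
  simpa [m.x_zero] using m.mono (Nat.zero_le i) hi

theorem Mesh.le_one {N : ℕ} (m : Mesh N) {i : ℕ} (hi : i ≤ N) : m.x i ≤ 1 := by
  simpa [m.x_last] using m.mono hi le_rfl

theorem Mesh.pos {N : ℕ} (m : Mesh N) : 0 < N := by
  rcases Nat.eq_zero_or_pos N with rfl | h
  · exact absurd (m.x_zero.symm.trans m.x_last) zero_ne_one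
  · exact h

theorem Mesh.h_pos {N : ℕ} (m : Mesh N) {i : ℕ} (hi : i < N) : 0 < m.h i :=
  sub_pos.2 (m.x_mono i hi)

theorem Mesh.sum_integral {N : ℕ} (m : Mesh N) {g : ℝ → ℝ} (hg : IntervalIntegrable g volume 0 1) :
    ∑ i ∈ Finset.range N, ∫ t in (m.x i)..(m.x (i + 1)), g t = ∫ t in (0 : ℝ)..1, g t := by
  rw [intervalIntegral.sum_integral_adjacent_intervals, m.x_zero, m.x_last]
  intro k hk
  refine hg.mono_set ?_
  rw [uIcc_of_le (m.x_mono k hk).le, uIcc_of_le zero_le_one]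
  exact Icc_subset_Icc (m.nonneg hk.le) (m.le_one hk)

theorem Mesh.IsEquidistributing.sum_le {N : ℕ} {m : Mesh N} {g : ℝ → ℝ}
    (hg : IntervalIntegrable (fun t => g t ^ 2) volume 0 1) (heq : m.IsEquidistributing g) :
    (N : ℝ) ^ 2 * ∑ i ∈ Finset.range N, m.h i ^ 2 * ∫ t in (m.x i)..(m.x (i + 1)), g t ^ 2 ≤
      8 * ∫ t in (0 : ℝ)..1, g t ^ 2 := by
  have havg0 : ∀ i, 0 ≤ m.avg g i := fun i => Real.sqrt_nonneg _
  have hcube : ∀ i, (m.avg g i ^ ((2 : ℝ) / 3)) ^ 3 = m.avg g i ^ 2 := by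
    intro i
    rw [← Real.rpow_natCast, ← Real.rpow_mul (havg0 i), ← Real.rpow_natCast]
    norm_num
  have hsq : ∀ i ∈ Finset.range N,
      m.h i * m.avg g i ^ 2 = ∫ t in (m.x i)..(m.x (i + 1)), g t ^ 2 := by
    intro i hi
    have hi := Finset.mem_range.1 hi
    have hp := m.h_pos hi
    have h0 : 0 ≤ ∫ t in (m.x i)..(m.x (i + 1)), g t ^ 2 :=
      intervalIntegral.integral_nonneg (m.x_mono i hi).le fun _ _ => sq_nonneg _
    rw [Mesh.avg, Real.sq_sqrt (by positivity)]
    field_simp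
  have hα : 0 ≤ m.alpha g := by
    refine pow_nonneg (Finset.sum_nonneg fun i hi => ?_) 3
    exact mul_nonneg (m.h_pos (Finset.mem_range.1 hi)).le (Real.rpow_nonneg (havg0 i) _)
  have hbase : ∀ i, 0 ≤ 1 + (m.alpha g)⁻¹ * m.avg g i ^ 2 := fun i => by positivity
  have key := sum_cube_le_of_equidistributing m.pos (h := m.h)
    (A := fun i => m.avg g i ^ ((2 : ℝ) / 3)) (ρ := m.rho g) (σ := m.sigma g)
    (fun i hi => m.h_pos (Finset.mem_range.1 hi))
    (by simp only [Mesh.h, Finset.sum_range_sub, m.x_zero, m.x_last, sub_zero])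
    (fun i _ => Real.rpow_nonneg (havg0 i) _)
    (fun i _ => Real.rpow_nonneg (hbase i) _)
    (fun i _ => by
      rw [hcube, Mesh.rho, ← Real.rpow_natCast, ← Real.rpow_mul (hbase i)]
      norm_num [Mesh.alpha])
    rfl (fun i hi => heq i (Finset.mem_range.1 hi))
  simp only [hcube] at key
  rw [Finset.sum_congr rfl hsq, m.sum_integral hg] at key
  refine le_trans (le_of_eq ?_) key
  congr 1
  refine Finset.sum_congr rfl fun i hi => ?_
  rw [← hsq i hi]
  ring

end Equidistribution

section Sobolev

theorem memLp_of_sq_intervalIntegrable {g : ℝ → ℝ} (hg : Measurable g)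
    (h : IntervalIntegrable (fun t => g t ^ 2) volume 0 1) :
    MemLp g 2 (volume.restrict (Ioc 0 1)) :=
  (memLp_two_iff_integrable_sq hg.aestronglyMeasurable).2
    ((intervalIntegrable_iff_integrableOn_Ioc_of_le zero_le_one).1 h)

theorem memLp_top_of_continuousOn {g : ℝ → ℝ} (hg : ContinuousOn g (Icc 0 1)) :
    MemLp g ⊤ (volume.restrict (Ioc 0 1)) := by
  obtain ⟨M, hM⟩ := isCompact_Icc.exists_bound_of_continuousOn hg
  refine memLp_top_of_bound
    ((hg.mono Ioc_subset_Icc_self).aestronglyMeasurable measurableSet_Ioc) M ?_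
  filter_upwards [ae_restrict_mem measurableSet_Ioc] with x hx
  exact hM x (Ioc_subset_Icc_self hx)

theorem memLp_top_mul {φ g : ℝ → ℝ} (hφ : MemLp φ ⊤ (volume.restrict (Ioc (0 : ℝ) 1)))
    (hg : MemLp g 2 (volume.restrict (Ioc (0 : ℝ) 1))) :
    MemLp (fun t => φ t * g t) 2 (volume.restrict (Ioc (0 : ℝ) 1)) :=
  hg.mul hφ

variable (v w : H1)

theorem H1.isPrimitive : IsPrimitive v.val v.dval 0 1 :=
  IsPrimitive.of_integral zero_le_one v.dval_int v.ftc

theorem H1.memLp_dval : MemLp v.dval 2 (volume.restrict (Ioc 0 1)) :=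
  memLp_of_sq_intervalIntegrable v.dval_meas v.dval_sq_int

theorem H1.memLp_top_val : MemLp v.val ⊤ (volume.restrict (Ioc 0 1)) :=
  memLp_top_of_continuousOn (v.isPrimitive.continuousOn zero_le_one)

theorem H1.memLp_val : MemLp v.val 2 (volume.restrict (Ioc 0 1)) :=
  v.memLp_top_val.mono_exponent le_top

theorem H1.integral_sq_val_le (h : v.val 0 = 0) :
    ∫ t in (0 : ℝ)..1, v.val t ^ 2 ≤ ∫ t in (0 : ℝ)..1, v.dval t ^ 2 := by
  have := integral_sq_le_of_primitive zero_le_one v.memLp_dval (f := v.val)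
    (fun x hx => by rw [v.ftc x hx, h, zero_add])
  simpa using this

theorem H1.val_sub_val {x y : ℝ} (hx : 0 ≤ x) (hxy : x ≤ y) (hy : y ≤ 1) :
    ∫ t in x..y, v.dval t = v.val y - v.val x :=
  (v.isPrimitive.mono hx hxy hy).integral_eq_sub hxy

/-- The difference of two functions in `H¹(0,1)`. -/
def H1.sub : H1 where
  val := fun t => v.val t - w.val t
  dval := fun t => v.dval t - w.dval t
  dval_meas := v.dval_meas.sub w.dval_meas
  dval_int := v.dval_int.sub w.dval_int
  dval_sq_int := MemLp.intervalIntegrable_sq zero_le_one (v.memLp_dval.sub w.memLp_dval)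
  ftc := fun x hx => by
    have hsub : uIcc 0 x ⊆ uIcc (0 : ℝ) 1 := by
      rw [uIcc_of_le hx.1, uIcc_of_le zero_le_one]
      exact Icc_subset_Icc_right hx.2
    rw [v.ftc x hx, w.ftc x hx, intervalIntegral.integral_sub (v.dval_int.mono_set hsub)
      (w.dval_int.mono_set hsub)]
    ring

/-- A function in `H¹(0,1)` given by a value at `0` and a derivative in `L²`. -/
def H1.ofDeriv (g : ℝ → ℝ) (hg : Measurable g) (hg2 : MemLp g 2 (volume.restrict (Ioc 0 1))) :
    H1 where
  val := fun x => ∫ t in (0 : ℝ)..x, g t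
  dval := g
  dval_meas := hg
  dval_int := by
    simpa using MemLp.intervalIntegrable_mul zero_le_one hg2 (memLp_const (1 : ℝ))
  dval_sq_int := MemLp.intervalIntegrable_sq zero_le_one hg2
  ftc := fun x _ => by simp

end Sobolev

section BilinearForm

variable (P : Coeffs)

theorem ae_restrict_Ioc_of_Ioo {s t : ℝ} {p : ℝ → Prop}
    (h : ∀ᵐ x ∂(volume.restrict (Ioo s t)), p x) : ∀ᵐ x ∂(volume.restrict (Ioc s t)), p x := by
  rwa [restrict_Ioo_eq_restrict_Ioc] at h

theorem memLp_top_of_ae_bound {g : ℝ → ℝ} (hg : Measurable g)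
    (h : ∃ M : ℝ, ∀ᵐ x ∂(volume.restrict (Ioo (0 : ℝ) 1)), |g x| ≤ M) :
    MemLp g ⊤ (volume.restrict (Ioc (0 : ℝ) 1)) := by
  obtain ⟨M, hM⟩ := h
  exact memLp_top_of_bound hg.aestronglyMeasurable M (ae_restrict_Ioc_of_Ioo hM)

theorem Coeffs.isPrimitive_a : IsPrimitive P.a P.a' 0 1 :=
  IsPrimitive.of_integral zero_le_one P.a'_int P.ftc_a

theorem Coeffs.isPrimitive_b : IsPrimitive P.b P.b' 0 1 :=
  IsPrimitive.of_integral zero_le_one P.b'_int P.ftc_b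

theorem Coeffs.memLp_a : MemLp P.a ⊤ (volume.restrict (Ioc (0 : ℝ) 1)) :=
  memLp_top_of_continuousOn (P.isPrimitive_a.continuousOn zero_le_one)

theorem Coeffs.memLp_b : MemLp P.b ⊤ (volume.restrict (Ioc (0 : ℝ) 1)) :=
  memLp_top_of_continuousOn (P.isPrimitive_b.continuousOn zero_le_one)

theorem Coeffs.memLp_c : MemLp P.c ⊤ (volume.restrict (Ioc (0 : ℝ) 1)) :=
  memLp_top_of_ae_bound P.c_meas P.c_bdd

theorem Coeffs.memLp_a' : MemLp P.a' ⊤ (volume.restrict (Ioc (0 : ℝ) 1)) :=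
  memLp_top_of_ae_bound P.a'_meas P.a'_bdd

theorem Coeffs.exists_bound : ∃ M : ℝ, 0 < M ∧ ∀ᵐ x ∂(volume.restrict (Ioc (0 : ℝ) 1)),
    |P.a x| ≤ M ∧ |P.b x| ≤ M ∧ |P.c x| ≤ M ∧ |P.a' x| ≤ M := by
  obtain ⟨A, hA⟩ := isCompact_Icc.exists_bound_of_continuousOn
    (P.isPrimitive_a.continuousOn zero_le_one)
  obtain ⟨B, hB⟩ := isCompact_Icc.exists_bound_of_continuousOn
    (P.isPrimitive_b.continuousOn zero_le_one)
  obtain ⟨C, hC⟩ := P.c_bdd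
  obtain ⟨D, hD⟩ := P.a'_bdd
  refine ⟨1 + |A| + |B| + |C| + |D|, by positivity, ?_⟩
  filter_upwards [ae_restrict_Ioc_of_Ioo hC, ae_restrict_Ioc_of_Ioo hD, ae_mem_Ioo 0 1]
    with x hc hd hx
  have ha := hA x (Ioo_subset_Icc_self hx)
  have hb := hB x (Ioo_subset_Icc_self hx)
  rw [Real.norm_eq_abs] at ha hb
  have h1 := abs_nonneg A
  have h2 := abs_nonneg B
  have h3 := abs_nonneg C
  have h4 := abs_nonneg D
  refine ⟨?_, ?_, ?_, ?_⟩ <;> linarith [le_abs_self A, le_abs_self B, le_abs_self C, le_abs_self D]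

theorem Coeffs.intervalIntegrable_B (v w : H1) : IntervalIntegrable (fun t =>
    P.a t * v.dval t * w.dval t + P.b t * v.dval t * w.val t + P.c t * v.val t * w.val t)
    volume 0 1 :=
  ((MemLp.intervalIntegrable_mul zero_le_one (memLp_top_mul P.memLp_a v.memLp_dval)
    w.memLp_dval).add
  (MemLp.intervalIntegrable_mul zero_le_one (memLp_top_mul P.memLp_b v.memLp_dval)
    w.memLp_val)).add
  (MemLp.intervalIntegrable_mul zero_le_one (memLp_top_mul P.memLp_c v.memLp_val)
    w.memLp_val)

theorem Coeffs.B_sub_left (v₁ v₂ w : H1) : P.B (v₁.sub v₂) w = P.B v₁ w - P.B v₂ w := by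
  rw [Coeffs.B, Coeffs.B, Coeffs.B, ← intervalIntegral.integral_sub
    (P.intervalIntegrable_B v₁ w) (P.intervalIntegrable_B v₂ w)]
  refine intervalIntegral.integral_congr fun t _ => ?_
  simp only [H1.sub]
  ring

theorem Coeffs.B_sub_right (v w₁ w₂ : H1) : P.B v (w₁.sub w₂) = P.B v w₁ - P.B v w₂ := by
  rw [Coeffs.B, Coeffs.B, Coeffs.B, ← intervalIntegral.integral_sub
    (P.intervalIntegrable_B v w₁) (P.intervalIntegrable_B v w₂)]
  refine intervalIntegral.integral_congr fun t _ => ?_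
  simp only [H1.sub]
  ring

theorem Coeffs.coercive {e : H1} (h0 : e.val 0 = 0) (h1 : e.val 1 = 0) :
    P.a0 * ∫ t in (0 : ℝ)..1, e.dval t ^ 2 ≤ P.B e e := by
  have hp := P.isPrimitive_b.mul (e.isPrimitive.mul e.isPrimitive)
  have hz := hp.integral_eq_sub zero_le_one
  have hi := hp.intervalIntegrable zero_le_one
  simp only [h0, h1, mul_zero, sub_zero] at hz
  have hle := intervalIntegral_mono_ae_restrict_Ioc zero_le_one
    ((e.dval_sq_int.const_mul P.a0).add (hi.const_mul (1 / 2))) (P.intervalIntegrable_B e e) (by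
      filter_upwards [ae_restrict_Ioc_of_Ioo P.cb_nonneg, ae_mem_Ioo 0 1] with t ht ht'
      have := P.a_lb t (Ioo_subset_Icc_self ht')
      nlinarith [mul_nonneg ht (sq_nonneg (e.val t)),
        mul_nonneg (sub_nonneg.2 this) (sq_nonneg (e.dval t))])
  rw [intervalIntegral.integral_add (e.dval_sq_int.const_mul P.a0) (hi.const_mul (1 / 2)),
    intervalIntegral.integral_const_mul, intervalIntegral.integral_const_mul, hz, mul_zero,
    add_zero] at hle
  exact hle

theorem Coeffs.memLp_res {f : ℝ → ℝ} (hf : MemL2 f) (v : H1) :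
    MemLp (P.res f v) 2 (volume.restrict (Ioc (0 : ℝ) 1)) :=
  (((memLp_of_sq_intervalIntegrable hf.1 hf.2).add (memLp_top_mul P.memLp_a' v.memLp_dval)).sub
    (memLp_top_mul P.memLp_b v.memLp_dval)).sub (memLp_top_mul P.memLp_c v.memLp_val)

/-- Division of a function in `H¹(0,1)` by the diffusion coefficient. -/
theorem Coeffs.exists_div_a (v : H1) : ∃ w : H1, (∀ x, w.val x = v.val x * (P.a x)⁻¹) ∧
    ∀ᵐ x ∂(volume.restrict (Ioc (0 : ℝ) 1)),
      w.dval x = v.dval x * (P.a x)⁻¹ + v.val x * (-P.a' x / P.a x ^ 2) := by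
  have hinv := P.isPrimitive_a.inv zero_le_one P.a0_pos P.a_lb
  have hp := v.isPrimitive.mul hinv
  have hi : MemLp (fun x => (P.a x)⁻¹) ⊤ (volume.restrict (Ioc (0 : ℝ) 1)) :=
    memLp_top_of_continuousOn (hinv.continuousOn zero_le_one)
  have hm : MemLp (fun x => v.dval x * (P.a x)⁻¹ + v.val x * (-P.a' x / P.a x ^ 2)) 2
      (volume.restrict (Ioc (0 : ℝ) 1)) := by
    have h1 := memLp_top_mul hi v.memLp_dval
    have h2 := memLp_top_mul P.memLp_a' (memLp_top_mul hi (memLp_top_mul hi v.memLp_val))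
    convert h1.sub h2 using 1
    ext x
    simp only [Pi.sub_apply, div_eq_mul_inv, sq, mul_inv]
    ring
  have hae := hm.aestronglyMeasurable.aemeasurable.ae_eq_mk
  have hmk := hm.ae_eq hae
  refine ⟨{ val := fun x => v.val x * (P.a x)⁻¹
            dval := hm.aestronglyMeasurable.aemeasurable.mk _
            dval_meas := hm.aestronglyMeasurable.aemeasurable.measurable_mk
            dval_int := by
              simpa using MemLp.intervalIntegrable_mul zero_le_one hmk (memLp_const (1 : ℝ))
            dval_sq_int := MemLp.intervalIntegrable_sq zero_le_one hmk
            ftc := ?_ }, fun x => rfl, hae.symm⟩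
  intro x hx
  have h1 := (hp.mono le_rfl hx.1 hx.2).integral_eq_sub hx.1
  have h2 := ae_restrict_of_ae_restrict_of_subset (Ioc_subset_Ioc_right hx.2) hae
  rw [intervalIntegral.integral_of_le hx.1, integral_congr_ae h2] at h1
  rw [intervalIntegral.integral_of_le hx.1, h1]
  ring

/-- Stability of the weak solution in terms of its own residual. -/
theorem Coeffs.IsWeakSolution.stability {P : Coeffs} {f : ℝ → ℝ} (hf : MemL2 f) {u : H1}
    (hu : P.IsWeakSolution f u) :
    P.a0 ^ 2 * ∫ t in (0 : ℝ)..1, u.dval t ^ 2 ≤ ∫ t in (0 : ℝ)..1, P.res f u t ^ 2 := by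
  obtain ⟨h0, h1, h⟩ := hu
  obtain ⟨w, hw, hw'⟩ := P.exists_div_a u
  have hweak := h w (by rw [hw, h0, zero_mul]) (by rw [hw, h1, zero_mul])
  have hr := P.memLp_res hf u
  have hr2 := MemLp.intervalIntegrable_sq zero_le_one hr
  have hv2 := MemLp.intervalIntegrable_sq zero_le_one u.memLp_val
  have hfw := MemLp.intervalIntegrable_mul zero_le_one
    (memLp_of_sq_intervalIntegrable hf.1 hf.2) w.memLp_val
  have ha := P.a0_pos
  have hle := intervalIntegral_mono_ae_restrict_Ioc zero_le_one
    (u.dval_sq_int.sub ((P.intervalIntegrable_B u w).sub hfw))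
    ((hr2.const_mul (1 / (2 * P.a0 ^ 2))).add (hv2.const_mul (1 / 2))) (by
      filter_upwards [hw', ae_mem_Ioo 0 1] with t ht ht'
      have hat := P.a_lb t (Ioo_subset_Icc_self ht')
      have hat0 := ha.trans_le hat
      rw [ht, hw]
      have e1 : u.dval t ^ 2 - ((P.a t * u.dval t * (u.dval t * (P.a t)⁻¹ + u.val t *
          (-P.a' t / P.a t ^ 2)) + P.b t * u.dval t * (u.val t * (P.a t)⁻¹) +
          P.c t * u.val t * (u.val t * (P.a t)⁻¹)) - f t * (u.val t * (P.a t)⁻¹)) =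
          (P.res f u t * (P.a t)⁻¹) * u.val t := by
        rw [Coeffs.res]
        field_simp
        ring
      rw [e1]
      have h2 : (P.res f u t * (P.a t)⁻¹) ^ 2 ≤ 1 / P.a0 ^ 2 * P.res f u t ^ 2 := by
        rw [mul_pow, mul_comm, one_div, ← inv_pow]
        gcongr
      have h3 : 1 / (2 * P.a0 ^ 2) * P.res f u t ^ 2 =
          1 / 2 * (1 / P.a0 ^ 2 * P.res f u t ^ 2) := by ring
      rw [h3]
      nlinarith [sq_nonneg (P.res f u t * (P.a t)⁻¹ - u.val t)])
  have hB : ∫ t in (0 : ℝ)..1, (P.a t * u.dval t * w.dval t + P.b t * u.dval t * w.val t +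
      P.c t * u.val t * w.val t) = ∫ t in (0 : ℝ)..1, f t * w.val t := hweak
  rw [intervalIntegral.integral_sub u.dval_sq_int ((P.intervalIntegrable_B u w).sub hfw),
    intervalIntegral.integral_sub (P.intervalIntegrable_B u w) hfw, hB,
    intervalIntegral.integral_add (hr2.const_mul _) (hv2.const_mul _),
    intervalIntegral.integral_const_mul, intervalIntegral.integral_const_mul] at hle
  have hpo := u.integral_sq_val_le h0
  have hfin : ∫ t in (0 : ℝ)..1, u.dval t ^ 2 ≤
      1 / P.a0 ^ 2 * ∫ t in (0 : ℝ)..1, P.res f u t ^ 2 := by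
    have : 1 / (2 * P.a0 ^ 2) * ∫ t in (0 : ℝ)..1, P.res f u t ^ 2 =
      1 / 2 * (1 / P.a0 ^ 2 * ∫ t in (0 : ℝ)..1, P.res f u t ^ 2) := by ring
    linarith
  rwa [one_div, inv_mul_eq_div, le_div_iff₀ (by positivity), mul_comm] at hfin

end BilinearForm

section Galerkin

variable {P : Coeffs} {f : ℝ → ℝ} {N : ℕ} {m : Mesh N} {u uh : H1}

theorem Mesh.exists_interpolant (m : Mesh N) (e : H1) (h0 : e.val 0 = 0) :
    ∃ I : H1, (∀ j ≤ N, I.val (m.x j) = e.val (m.x j)) ∧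
      ∀ i < N, ∀ t ∈ Ioo (m.x i) (m.x (i + 1)),
        I.dval t = (e.val (m.x (i + 1)) - e.val (m.x i)) / m.h i := by
  set s : ℕ → ℝ := fun i => (e.val (m.x (i + 1)) - e.val (m.x i)) / m.h i with hs
  set g : ℝ → ℝ := fun t => ∑ i ∈ Finset.range N,
    (Ioo (m.x i) (m.x (i + 1))).indicator (fun _ => s i) t with hg
  have hgm : Measurable g :=
    Finset.measurable_fun_sum _ fun i _ => measurable_const.indicator measurableSet_Ioo
  have hg2 : MemLp g 2 (volume.restrict (Ioc 0 1)) :=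
    memLp_finsetSum _ fun i _ => (memLp_const (s i)).indicator measurableSet_Ioo
  have hval : ∀ i < N, ∀ t ∈ Ioo (m.x i) (m.x (i + 1)), g t = s i := by
    intro i hi t ht
    rw [hg]
    dsimp only
    rw [Finset.sum_eq_single_of_mem i (Finset.mem_range.2 hi), indicator_of_mem ht]
    intro j hj hji
    refine indicator_of_notMem (fun hj' => ?_) _
    rcases hji.lt_or_gt with h | h
    · have := m.mono (Nat.succ_le_of_lt h) hi.le
      exact absurd (ht.1.trans (hj'.2.trans_le this)) (lt_irrefl _)
    · have := m.mono (Nat.succ_le_of_lt h) (Finset.mem_range.1 hj).le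
      exact absurd (hj'.1.trans (ht.2.trans_le this)) (lt_irrefl _)
  refine ⟨H1.ofDeriv g hgm hg2, ?_, hval⟩
  intro j hj
  induction j with
  | zero => simp [H1.ofDeriv, m.x_zero, h0]
  | succ j ih =>
    have ih := ih (by omega)
    have hlt := m.x_mono j hj
    have h1 := (H1.ofDeriv g hgm hg2).val_sub_val (m.nonneg (by omega)) hlt.le (m.le_one hj)
    have h2 : ∫ t in (m.x j)..(m.x (j + 1)), (H1.ofDeriv g hgm hg2).dval t =
        ∫ t in (m.x j)..(m.x (j + 1)), s j := by
      rw [intervalIntegral.integral_of_le hlt.le, intervalIntegral.integral_of_le hlt.le]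
      refine integral_congr_ae ?_
      filter_upwards [ae_mem_Ioo (m.x j) (m.x (j + 1))] with t ht using hval j hj t ht
    have hh := m.h_pos hj
    have h3 : (m.x (j + 1) - m.x j) * s j = e.val (m.x (j + 1)) - e.val (m.x j) := by
      rw [hs]
      exact mul_div_cancel₀ _ hh.ne'
    rw [h1, intervalIntegral.integral_const, smul_eq_mul, h3, ih] at h2
    linarith

theorem integral_residual_element_le (hf : MemL2 f) {x y : ℝ} (hx : 0 ≤ x) (hxy : x < y)
    (hy : y ≤ 1) {σ s : ℝ} (hσ : ∀ t ∈ Ioo x y, uh.dval t = σ) {e w : H1}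
    (hwx : w.val x = 0) (hwy : w.val y = 0) (hw : ∀ t ∈ Ioo x y, w.dval t = e.dval t - s) :
    ∫ t in x..y, (f t * w.val t - (P.a t * uh.dval t * w.dval t + P.b t * uh.dval t * w.val t +
        P.c t * uh.val t * w.val t)) ≤
      1 / (2 * P.a0) * ((y - x) ^ 2 * ∫ t in x..y, P.res f uh t ^ 2) +
        P.a0 / 2 * ∫ t in x..y, e.dval t ^ 2 := by
  have ha := P.a0_pos
  have hr := MemLp.restrict_Ioc_mono (P.memLp_res hf uh) hx hy
  have hwd := MemLp.restrict_Ioc_mono w.memLp_dval hx hy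
  have hwv := MemLp.restrict_Ioc_mono w.memLp_val hx hy
  have hed := MemLp.restrict_Ioc_mono e.memLp_dval hx hy
  have hp := (P.isPrimitive_a.mul w.isPrimitive).mono hx hxy.le hy
  have hz := hp.integral_eq_sub hxy.le
  have hi := hp.intervalIntegrable hxy.le
  rw [hwx, hwy, mul_zero, mul_zero, sub_zero] at hz
  have hrw := MemLp.intervalIntegrable_mul hxy.le hr hwv
  have hr2 := MemLp.intervalIntegrable_sq hxy.le hr
  have hw2 := MemLp.intervalIntegrable_sq hxy.le hwv
  have hd2 := MemLp.intervalIntegrable_sq hxy.le hwd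
  have he2 := MemLp.intervalIntegrable_sq hxy.le hed
  have hparts : ∫ t in x..y, (f t * w.val t - (P.a t * uh.dval t * w.dval t +
      P.b t * uh.dval t * w.val t + P.c t * uh.val t * w.val t)) =
      ∫ t in x..y, P.res f uh t * w.val t := by
    rw [← sub_zero (∫ t in x..y, P.res f uh t * w.val t), ← mul_zero σ, ← hz,
      ← intervalIntegral.integral_const_mul, ← intervalIntegral.integral_sub hrw (hi.const_mul σ),
      intervalIntegral.integral_of_le hxy.le, intervalIntegral.integral_of_le hxy.le]
    refine integral_congr_ae ?_
    filter_upwards [ae_mem_Ioo x y] with t ht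
    simp only [Coeffs.res, hσ t ht]
    ring
  have hpoinc : ∫ t in x..y, w.val t ^ 2 ≤ (y - x) ^ 2 * ∫ t in x..y, w.dval t ^ 2 :=
    integral_sq_le_of_primitive hxy.le hwd fun t ht => by
      rw [w.val_sub_val hx ht.1 (ht.2.trans hy), hwx, sub_zero]
  have hproj : ∫ t in x..y, w.dval t ^ 2 ≤ ∫ t in x..y, e.dval t ^ 2 := by
    have hwi : IntervalIntegrable w.dval volume x y := by
      simpa using MemLp.intervalIntegrable_mul hxy.le hwd (memLp_const (1 : ℝ))
    have hle := intervalIntegral_mono_ae_restrict_Ioc hxy.le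
      (hd2.add (hwi.const_mul (2 * s))) he2 (by
        filter_upwards [ae_mem_Ioo x y] with t ht
        have := hw t ht
        have h2 : e.dval t = w.dval t + s := by linarith
        rw [h2]
        nlinarith [sq_nonneg s])
    rw [intervalIntegral.integral_add hd2 (hwi.const_mul _), intervalIntegral.integral_const_mul,
      w.val_sub_val hx hxy.le hy, hwx, hwy, sub_zero, mul_zero, add_zero] at hle
    exact hle
  have hpos : 0 < y - x := sub_pos.2 hxy
  have hyoung := intervalIntegral.integral_mono_on hxy.le hrw
    ((hr2.const_mul ((y - x) ^ 2 / (2 * P.a0))).add (hw2.const_mul (P.a0 / (2 * (y - x) ^ 2))))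
    (fun t _ => by
      have hsq := sq_nonneg ((y - x) ^ 2 * P.res f uh t - P.a0 * w.val t)
      have : 0 ≤ ((y - x) ^ 2 * P.res f uh t - P.a0 * w.val t) ^ 2 /
        (2 * P.a0 * (y - x) ^ 2) := by positivity
      refine sub_nonneg.1 (this.trans_eq ?_)
      field_simp
      ring)
  rw [intervalIntegral.integral_add (hr2.const_mul _) (hw2.const_mul _),
    intervalIntegral.integral_const_mul, intervalIntegral.integral_const_mul] at hyoung
  rw [hparts]
  refine hyoung.trans (add_le_add (le_of_eq (by ring)) ?_)
  calc P.a0 / (2 * (y - x) ^ 2) * ∫ t in x..y, w.val t ^ 2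
      ≤ P.a0 / (2 * (y - x) ^ 2) * ((y - x) ^ 2 * ∫ t in x..y, e.dval t ^ 2) := by
        gcongr
        exact hpoinc.trans (by gcongr)
    _ = _ := by field_simp

theorem Coeffs.IsFESolution.galerkin_orthogonality (hu : P.IsWeakSolution f u)
    (huh : P.IsFESolution f m uh) {v : H1} (h0 : v.val 0 = 0) (h1 : v.val 1 = 0)
    (hv : m.IsPL v) : P.B (u.sub uh) v = 0 := by
  rw [P.B_sub_left, hu.2.2 v h0 h1, huh.2.2.2 v h0 h1 hv, sub_self]

/-- A posteriori error bound by the element residuals. -/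
theorem Coeffs.IsFESolution.a_posteriori (hf : MemL2 f) (hu : P.IsWeakSolution f u)
    (huh : P.IsFESolution f m uh) :
    P.a0 ^ 2 * ∫ t in (0 : ℝ)..1, (u.sub uh).dval t ^ 2 ≤
      ∑ i ∈ Finset.range N, m.h i ^ 2 * ∫ t in (m.x i)..(m.x (i + 1)), P.res f uh t ^ 2 := by
  set e := u.sub uh with he
  have he0 : e.val 0 = 0 := by simp [he, H1.sub, hu.1, huh.1]
  have he1 : e.val 1 = 0 := by simp [he, H1.sub, hu.2.1, huh.2.1]
  have ha := P.a0_pos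
  obtain ⟨I, hI, hId⟩ := m.exists_interpolant e he0
  have hI0 : I.val 0 = 0 := by simpa [m.x_zero, he0] using hI 0 (Nat.zero_le N)
  have hI1 : I.val 1 = 0 := by simpa [m.x_last, he1] using hI N le_rfl
  set w := e.sub I with hw
  have hw0 : w.val 0 = 0 := by simp [hw, H1.sub, he0, hI0]
  have hw1 : w.val 1 = 0 := by simp [hw, H1.sub, he1, hI1]
  have hIPL : m.IsPL I := fun i hi => ⟨_, hId i hi⟩
  have hBe : P.B e e = ip f w - P.B uh w := by
    have h1 : P.B e w = P.B e e := by
      rw [hw, P.B_sub_right, huh.galerkin_orthogonality hu hI0 hI1 hIPL, sub_zero]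
    rw [← h1, he, P.B_sub_left, hu.2.2 w hw0 hw1]
  have hfw := MemLp.intervalIntegrable_mul zero_le_one
    (memLp_of_sq_intervalIntegrable hf.1 hf.2) w.memLp_val
  have hBi := P.intervalIntegrable_B uh w
  have hle : P.B e e ≤ 1 / (2 * P.a0) * ∑ i ∈ Finset.range N,
      m.h i ^ 2 * (∫ t in (m.x i)..(m.x (i + 1)), P.res f uh t ^ 2) +
      P.a0 / 2 * ∫ t in (0 : ℝ)..1, e.dval t ^ 2 := by
    rw [hBe, ip, Coeffs.B, ← intervalIntegral.integral_sub hfw hBi,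
      ← m.sum_integral (hfw.sub hBi), ← m.sum_integral e.dval_sq_int, Finset.mul_sum,
      Finset.mul_sum, ← Finset.sum_add_distrib]
    refine Finset.sum_le_sum fun i hi => ?_
    have hi := Finset.mem_range.1 hi
    obtain ⟨σ, hσ⟩ := huh.2.2.1 i hi
    exact integral_residual_element_le hf (m.nonneg hi.le) (m.x_mono i hi) (m.le_one hi) hσ
      (s := (e.val (m.x (i + 1)) - e.val (m.x i)) / m.h i)
      (by simp [hw, H1.sub, hI i hi.le]) (by simp [hw, H1.sub, hI (i + 1) hi])
      (fun t ht => by rw [← hId i hi t ht]; rfl)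
  have hc := P.coercive he0 he1
  set S := ∑ i ∈ Finset.range N,
      m.h i ^ 2 * (∫ t in (m.x i)..(m.x (i + 1)), P.res f uh t ^ 2) with hS
  set E := ∫ t in (0 : ℝ)..1, e.dval t ^ 2 with hE
  have h3 : P.a0 / 2 * E ≤ 1 / (2 * P.a0) * S := by linarith
  have h4 := mul_le_mul_of_nonneg_left h3 (show 0 ≤ 2 * P.a0 by positivity)
  calc P.a0 ^ 2 * E = 2 * P.a0 * (P.a0 / 2 * E) := by ring
    _ ≤ 2 * P.a0 * (1 / (2 * P.a0) * S) := h4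
    _ = S := by field_simp

/-- Quasi-optimality, compared with the zero function. -/
theorem Coeffs.IsFESolution.error_le (hu : P.IsWeakSolution f u) (huh : P.IsFESolution f m uh)
    {M : ℝ} (hb : ∀ᵐ x ∂(volume.restrict (Ioc (0 : ℝ) 1)),
      |P.a x| ≤ M ∧ |P.b x| ≤ M ∧ |P.c x| ≤ M ∧ |P.a' x| ≤ M) :
    P.a0 ^ 2 * ∫ t in (0 : ℝ)..1, (u.sub uh).dval t ^ 2 ≤
      9 * M ^ 2 * ∫ t in (0 : ℝ)..1, u.dval t ^ 2 := by
  set e := u.sub uh with he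
  have he0 : e.val 0 = 0 := by simp [he, H1.sub, hu.1, huh.1]
  have he1 : e.val 1 = 0 := by simp [he, H1.sub, hu.2.1, huh.2.1]
  have ha := P.a0_pos
  have hBe : P.B e e = P.B e u := by
    have := huh.galerkin_orthogonality hu huh.1 huh.2.1 huh.2.2.1
    rw [← sub_zero (P.B e u), ← this, ← P.B_sub_right]
  have hc := P.coercive he0 he1
  have hev2 := MemLp.intervalIntegrable_sq zero_le_one e.memLp_val
  have huv2 := MemLp.intervalIntegrable_sq zero_le_one u.memLp_val
  have young : ∀ k p q : ℝ, |k| ≤ M →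
      k * p * q ≤ P.a0 / 6 * p ^ 2 + 3 * M ^ 2 / (2 * P.a0) * q ^ 2 := by
    intro k p q hk
    have h1 : k ^ 2 ≤ M ^ 2 := sq_le_sq' (by linarith [neg_abs_le k]) ((le_abs_self k).trans hk)
    have h2 : 3 * k ^ 2 / (2 * P.a0) * q ^ 2 ≤ 3 * M ^ 2 / (2 * P.a0) * q ^ 2 := by gcongr
    have h3 : 0 ≤ (P.a0 * p - 3 * k * q) ^ 2 / (6 * P.a0) := by positivity
    have h4 : (P.a0 * p - 3 * k * q) ^ 2 / (6 * P.a0) =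
        P.a0 / 6 * p ^ 2 + 3 * k ^ 2 / (2 * P.a0) * q ^ 2 - k * p * q := by
      field_simp
      ring
    linarith
  have hle := intervalIntegral_mono_ae_restrict_Ioc zero_le_one (P.intervalIntegrable_B e u)
    (((e.dval_sq_int.const_mul (P.a0 / 3)).add (hev2.const_mul (P.a0 / 6))).add
      ((u.dval_sq_int.const_mul (3 * M ^ 2 / (2 * P.a0))).add
        (huv2.const_mul (2 * (3 * M ^ 2 / (2 * P.a0)))))) (by
      filter_upwards [hb] with t ht
      have h1 := young (P.a t) (e.dval t) (u.dval t) ht.1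
      have h2 := young (P.b t) (e.dval t) (u.val t) ht.2.1
      have h3 := young (P.c t) (e.val t) (u.val t) ht.2.2.1
      linarith)
  rw [intervalIntegral.integral_add
      ((e.dval_sq_int.const_mul (P.a0 / 3)).add (hev2.const_mul (P.a0 / 6)))
      ((u.dval_sq_int.const_mul (3 * M ^ 2 / (2 * P.a0))).add
        (huv2.const_mul (2 * (3 * M ^ 2 / (2 * P.a0))))),
    intervalIntegral.integral_add (e.dval_sq_int.const_mul _) (hev2.const_mul _),
    intervalIntegral.integral_add (u.dval_sq_int.const_mul _) (huv2.const_mul _)] at hle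
  simp only [intervalIntegral.integral_const_mul] at hle
  change P.B e u ≤ _ at hle
  have hpe := mul_le_mul_of_nonneg_left (e.integral_sq_val_le he0)
    (show 0 ≤ P.a0 / 6 by positivity)
  have hpu := mul_le_mul_of_nonneg_left (u.integral_sq_val_le hu.1)
    (show 0 ≤ 2 * (3 * M ^ 2 / (2 * P.a0)) by positivity)
  set E := ∫ t in (0 : ℝ)..1, e.dval t ^ 2
  set U := ∫ t in (0 : ℝ)..1, u.dval t ^ 2
  have h3 : P.a0 / 2 * E ≤ 3 * (3 * M ^ 2 / (2 * P.a0)) * U := by linarith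
  have h4 := mul_le_mul_of_nonneg_left h3 (show 0 ≤ 2 * P.a0 by positivity)
  calc P.a0 ^ 2 * E = 2 * P.a0 * (P.a0 / 2 * E) := by ring
    _ ≤ 2 * P.a0 * (3 * (3 * M ^ 2 / (2 * P.a0)) * U) := h4
    _ = 9 * M ^ 2 * U := by field_simp; ring

theorem integral_sq_res_le (hf : MemL2 f) (hu0 : u.val 0 = 0) (huh0 : uh.val 0 = 0)
    {M : ℝ} (hb : ∀ᵐ x ∂(volume.restrict (Ioc (0 : ℝ) 1)),
      |P.a x| ≤ M ∧ |P.b x| ≤ M ∧ |P.c x| ≤ M ∧ |P.a' x| ≤ M) :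
    ∫ t in (0 : ℝ)..1, P.res f uh t ^ 2 ≤
      4 * (∫ t in (0 : ℝ)..1, P.res f u t ^ 2) +
        12 * M ^ 2 * ∫ t in (0 : ℝ)..1, (u.sub uh).dval t ^ 2 := by
  set e := u.sub uh with he
  have he0 : e.val 0 = 0 := by simp [he, H1.sub, hu0, huh0]
  have hr := MemLp.intervalIntegrable_sq zero_le_one (P.memLp_res hf u)
  have hrh := MemLp.intervalIntegrable_sq zero_le_one (P.memLp_res hf uh)
  have hev2 := MemLp.intervalIntegrable_sq zero_le_one e.memLp_val
  have bound : ∀ k p : ℝ, |k| ≤ M → (k * p) ^ 2 ≤ M ^ 2 * p ^ 2 := by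
    intro k p hk
    rw [mul_pow]
    exact mul_le_mul_of_nonneg_right
      (sq_le_sq' (by linarith [neg_abs_le k]) ((le_abs_self k).trans hk)) (sq_nonneg p)
  have hle := intervalIntegral_mono_ae_restrict_Ioc zero_le_one hrh
    ((hr.const_mul 4).add
      ((e.dval_sq_int.const_mul (8 * M ^ 2)).add (hev2.const_mul (4 * M ^ 2)))) (by
      filter_upwards [hb] with t ht
      have h1 := bound (P.a' t) (e.dval t) ht.2.2.2
      have h2 := bound (P.b t) (e.dval t) ht.2.1
      have h3 := bound (P.c t) (e.val t) ht.2.2.1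
      have hres : P.res f uh t = P.res f u t - P.a' t * e.dval t + P.b t * e.dval t +
          P.c t * e.val t := by
        simp only [he, H1.sub, Coeffs.res]
        ring
      have hfour : ∀ w x y z : ℝ,
          (w - x + y + z) ^ 2 ≤ 4 * (w ^ 2 + x ^ 2 + y ^ 2 + z ^ 2) := fun w x y z => by
        nlinarith [sq_nonneg (w + x), sq_nonneg (w - y), sq_nonneg (w - z), sq_nonneg (x + y),
          sq_nonneg (x + z), sq_nonneg (y - z)]
      rw [hres]
      linarith [hfour (P.res f u t) (P.a' t * e.dval t) (P.b t * e.dval t) (P.c t * e.val t)])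
  rw [intervalIntegral.integral_add (hr.const_mul 4)
      ((e.dval_sq_int.const_mul (8 * M ^ 2)).add (hev2.const_mul (4 * M ^ 2))),
    intervalIntegral.integral_add (e.dval_sq_int.const_mul _) (hev2.const_mul _)] at hle
  simp only [intervalIntegral.integral_const_mul] at hle
  have hpe := mul_le_mul_of_nonneg_left (e.integral_sq_val_le he0)
    (show 0 ≤ 4 * M ^ 2 by positivity)
  linarith

end Galerkin

/-- a priori error bound on equidistributing meshes (Theorem 3.1). -/
theorem statement6 (P : Coeffs) :
    ∃ C : ℝ, 0 < C ∧
      ∀ f : ℝ → ℝ, MemL2 f →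
      ∀ u : H1, P.IsWeakSolution f u → u.IsH2 →
      ∀ (N : ℕ) (m : Mesh N) (uh : H1), P.IsFESolution f m uh →
        m.IsEquidistributing (P.res f uh) →
        L2 (fun t => u.dval t - uh.dval t) ≤ C * L2 (P.res f u) / (N:ℝ) := by
  obtain ⟨M, hM, hb⟩ := P.exists_bound
  have ha := P.a0_pos
  set K := (32 + 864 * M ^ 4 / P.a0 ^ 4) / P.a0 ^ 2 with hK
  have hK0 : 0 < K := by positivity
  refine ⟨√K, Real.sqrt_pos.2 hK0, fun f hf u hu _ N m uh huh heq => ?_⟩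
  have hN : (0 : ℝ) < N := by exact_mod_cast m.pos
  have h1 := huh.a_posteriori hf hu
  have h2 := heq.sum_le (MemLp.intervalIntegrable_sq zero_le_one (P.memLp_res hf uh))
  have h3 := integral_sq_res_le hf hu.1 huh.1 hb
  have h4 := huh.error_le hu hb
  have h5 := hu.stability hf
  change √(∫ t in (0 : ℝ)..1, (u.sub uh).dval t ^ 2) ≤
    √K * √(∫ t in (0 : ℝ)..1, P.res f u t ^ 2) / N
  set E := ∫ t in (0 : ℝ)..1, (u.sub uh).dval t ^ 2
  set U := ∫ t in (0 : ℝ)..1, u.dval t ^ 2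
  set R := ∫ t in (0 : ℝ)..1, P.res f u t ^ 2
  have h6 : P.a0 ^ 4 * E ≤ 9 * M ^ 2 * R := by
    calc P.a0 ^ 4 * E = P.a0 ^ 2 * (P.a0 ^ 2 * E) := by ring
      _ ≤ P.a0 ^ 2 * (9 * M ^ 2 * U) := by gcongr
      _ = 9 * M ^ 2 * (P.a0 ^ 2 * U) := by ring
      _ ≤ 9 * M ^ 2 * R := by gcongr
  have h7 : E ≤ 9 * M ^ 2 * R / P.a0 ^ 4 := by
    rw [le_div_iff₀ (by positivity)]
    linarith
  have h8 : (N : ℝ) ^ 2 * (P.a0 ^ 2 * E) ≤ 32 * R + 96 * M ^ 2 * E := by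
    have := mul_le_mul_of_nonneg_left h1 (sq_nonneg (N : ℝ))
    linarith
  have h9 : E ≤ K * R / (N : ℝ) ^ 2 := by
    rw [le_div_iff₀ (by positivity)]
    have h10 : 96 * M ^ 2 * E ≤ 96 * M ^ 2 * (9 * M ^ 2 * R / P.a0 ^ 4) := by gcongr
    calc E * (N : ℝ) ^ 2 = (N : ℝ) ^ 2 * (P.a0 ^ 2 * E) / P.a0 ^ 2 := by field_simp
      _ ≤ (32 * R + 96 * M ^ 2 * (9 * M ^ 2 * R / P.a0 ^ 4)) / P.a0 ^ 2 := by
        gcongr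
        linarith
      _ = K * R := by
        rw [hK]
        ring
  calc √E ≤ √(K * R / (N : ℝ) ^ 2) := Real.sqrt_le_sqrt h9
    _ = √K * √R / N := by
      rw [Real.sqrt_div' _ (sq_nonneg _), Real.sqrt_mul hK0.le, Real.sqrt_sq hN.le]

end EquidMesh
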